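/- There exists a constant C > 0 such that for every smooth compactly supported vector field u : ℝ³ → ℝ³ one has ‖(u·∇)u‖_{L²(ℝ³)} + ‖∇((u·∇)u)‖_{L²(ℝ³)} ≤ C · (‖∇u‖_{L²(ℝ³)} + ‖∇²u‖_{L²(ℝ³)})², where (u·∇)u is the vector field with components ∑_{k=1}^{3} u^k ∂_k u^j, ‖∇v‖_{L²}² := ∑_{i,j} ∫ (∂_i v^j)² dx, and ‖∇²u‖_{L²}² := ∑_{i,j,k} ∫ (∂_i ∂_j u^k)² dx. -/

import Mathlib

open MeasureTheory

/-- Partial derivative `∂ᵢ f` of a scalar function on `ℝ³`. -/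
noncomputable def pd (i : Fin 3) (f : (Fin 3 → ℝ) → ℝ) (x : Fin 3 → ℝ) : ℝ :=
  fderiv ℝ f x (Pi.single i 1)


abbrev E3 := Fin 3 → ℝ

lemma eLpNorm_four_le (g : E3 → ℝ) (hg : Continuous g) (X : ENNReal)
    (h2 : eLpNorm g 2 volume ≤ X) (h6 : eLpNorm g 6 volume ≤ X) : eLpNorm g 4 volume ≤ X := by
  have e2 := eLpNorm_nnreal_pow_eq_lintegral (f := g) (μ := volume) (p := 2) (by norm_num)
  have e4 := eLpNorm_nnreal_pow_eq_lintegral (f := g) (μ := volume) (p := 4) (by norm_num)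
  have e6 := eLpNorm_nnreal_pow_eq_lintegral (f := g) (μ := volume) (p := 6) (by norm_num)
  simp only [ENNReal.coe_ofNat, NNReal.coe_ofNat] at e2 e4 e6
  have hH := ENNReal.lintegral_mul_le_Lp_mul_Lq (volume : Measure E3) (p := 2) (q := 2)
    (Real.HolderConjugate.two_two) (f := fun x => ‖g x‖ₑ) (g := fun x => ‖g x‖ₑ ^ (3:ℝ))
    (by fun_prop) (by fun_prop)
  have k1 : ∀ x, (‖g x‖ₑ ^ (3:ℝ)) ^ (2:ℝ) = ‖g x‖ₑ ^ (6:ℝ) := fun x => by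
    rw [← ENNReal.rpow_mul]; norm_num
  have k2 : ∀ x, ((fun x => ‖g x‖ₑ) * (fun x => ‖g x‖ₑ ^ (3:ℝ))) x = ‖g x‖ₑ ^ (4:ℝ) := fun x => by
    have : (4:ℝ) = 1 + 3 := by norm_num
    rw [this, ENNReal.rpow_add_of_nonneg _ _ (by norm_num) (by norm_num), ENNReal.rpow_one]; rfl
  simp only [k1, k2] at hH
  rw [← e2, ← e4, ← e6, ← ENNReal.rpow_mul, ← ENNReal.rpow_mul] at hH
  rw [← ENNReal.rpow_le_rpow_iff (show (0:ℝ) < 4 by norm_num)]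
  calc _ ≤ _ := hH
    _ ≤ X ^ ((2:ℝ) * (1/2)) * X ^ ((6:ℝ) * (1/2)) := by gcongr
    _ = _ := by
      rw [← ENNReal.rpow_add_of_nonneg _ _ (by norm_num) (by norm_num)]; norm_num

lemma eLpNorm_scale {F : Type*} [NormedAddCommGroup F] (h : E3 → F) (hh : Continuous h)
    (x : E3) {t : ℝ} (ht : 0 < t) :
    eLpNorm (fun y => h (x + t • y)) 6 volume
      = ENNReal.ofReal (t ^ (-(1/2) : ℝ)) * eLpNorm h 6 volume := by
  have h1 : eLpNorm (fun y => h (x + t • y)) 6 volume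
      = eLpNorm (fun y => h (x + y)) 6 (Measure.map (t • ·) (volume : Measure E3)) := by
    rw [eLpNorm_map_measure]
    · rfl
    · exact (by fun_prop : Continuous (fun y => h (x + y))).aestronglyMeasurable
    · exact (by fun_prop : Continuous (fun y : E3 => t • y)).aemeasurable
  rw [h1, Measure.map_addHaar_smul _ ht.ne', eLpNorm_smul_measure_of_ne_top (by norm_num)]
  have h2 := eLpNorm_comp_measurePreserving (p := 6) hh.aestronglyMeasurable
    (measurePreserving_add_left (volume : Measure E3) x)
  have h3 : eLpNorm (fun y => h (x + y)) 6 volume = eLpNorm h 6 volume := h2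
  rw [h3, smul_eq_mul]
  congr 1
  simp only [Module.finrank_fin_fun]
  rw [ENNReal.ofReal_rpow_of_nonneg (by positivity) (by norm_num)]
  congr 1
  rw [abs_of_pos (by positivity), ← Real.rpow_natCast, ← Real.rpow_neg ht.le, ← Real.rpow_mul ht.le]
  norm_num

noncomputable def Kc : ENNReal := ∫⁻ t in Set.Icc (0:ℝ) 1, ENNReal.ofReal (t ^ (-(1/2) : ℝ))

lemma Kc_lt_top : Kc < ⊤ := by
  have h := intervalIntegral.intervalIntegrable_rpow' (a := 0) (b := 1) (r := -(1/2)) (by norm_num)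
  rw [intervalIntegrable_iff_integrableOn_Icc_of_le (by norm_num)] at h
  have := h.lintegral_lt_top
  exact this

lemma morrey (f : E3 → ℝ) (hf : ContDiff ℝ 1 f) (x : E3) :
    ‖f x‖ₑ ≤ eLpNorm f 6 volume + Kc * eLpNorm (fderiv ℝ f) 6 volume := by
  set Q : Set E3 := Set.Icc 0 1 with hQ
  have hvol : volume Q = 1 := by simp [hQ, Real.volume_Icc_pi]
  have : IsProbabilityMeasure (volume.restrict Q) := ⟨by simp [hvol]⟩
  have hfc := hf.continuous
  have hdc : Continuous (fderiv ℝ f) := hf.continuous_fderiv (by norm_num)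
  have hpt : ∀ y ∈ Q, ‖f x‖ₑ ≤ ‖f (x + (1:ℝ) • y)‖ₑ
      + ∫⁻ t in Set.Icc (0:ℝ) 1, ‖fderiv ℝ f (x + t • y)‖ₑ := by
    intro y hy
    have hder : ∀ t : ℝ, HasDerivAt (fun t : ℝ => f (x + t • y)) (fderiv ℝ f (x + t • y) y) t := by
      intro t
      have h1 : HasDerivAt (fun t : ℝ => x + t • y) y t := by
        simpa using ((hasDerivAt_id t).smul_const y).const_add x
      exact ((hf.differentiable (by norm_num)) _).hasFDerivAt.comp_hasDerivAt t h1
    have hc : ContDiff ℝ 1 (fun t : ℝ => f (x + t • y)) := by fun_prop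
    have h := enorm_sub_le_lintegral_deriv_of_contDiffOn_Icc hc.contDiffOn (zero_le_one' ℝ)
    have hy1 : ‖y‖ ≤ 1 := by
      rw [pi_norm_le_iff_of_nonneg zero_le_one]
      intro i
      rw [Real.norm_eq_abs, abs_of_nonneg (hy.1 i)]
      exact hy.2 i
    have hy1' : ‖y‖ₑ ≤ 1 := by
      rw [← ofReal_norm]; exact ENNReal.ofReal_le_one.2 hy1
    have h' : ∫⁻ t in Set.Icc (0:ℝ) 1, ‖deriv (fun t : ℝ => f (x + t • y)) t‖ₑ
        ≤ ∫⁻ t in Set.Icc (0:ℝ) 1, ‖fderiv ℝ f (x + t • y)‖ₑ := by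
      refine lintegral_mono fun t => ?_
      rw [(hder t).deriv]
      calc _ ≤ ‖fderiv ℝ f (x + t • y)‖ₑ * ‖y‖ₑ := ContinuousLinearMap.le_opENorm _ _
        _ ≤ ‖fderiv ℝ f (x + t • y)‖ₑ * 1 := by gcongr
        _ = _ := mul_one _
    have e : f x = f (x + (1:ℝ) • y) - (f (x + (1:ℝ) • y) - f (x + (0:ℝ) • y)) := by simp
    calc ‖f x‖ₑ = _ := by rw [e]
      _ ≤ ‖f (x + (1:ℝ) • y)‖ₑ + ‖f (x + (1:ℝ) • y) - f (x + (0:ℝ) • y)‖ₑ := enorm_sub_le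
      _ ≤ _ := by gcongr; exact h.trans h'
  have hL : ∀ {F : Type} [NormedAddCommGroup F] (h : E3 → F), Continuous h → ∀ t : ℝ, 0 < t →
      ∫⁻ y in Q, ‖h (x + t • y)‖ₑ ≤ ENNReal.ofReal (t ^ (-(1/2) : ℝ)) * eLpNorm h 6 volume := by
    intro F _ h hh t ht
    rw [← eLpNorm_scale h hh x ht]
    have hm : Continuous (fun y => h (x + t • y)) := by fun_prop
    calc _ = eLpNorm (fun y => h (x + t • y)) 1 (volume.restrict Q) :=
          (eLpNorm_one_eq_lintegral_enorm).symm
      _ ≤ eLpNorm (fun y => h (x + t • y)) 6 (volume.restrict Q) :=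
          eLpNorm_le_eLpNorm_of_exponent_le (by norm_num) hm.aestronglyMeasurable
      _ ≤ _ := eLpNorm_mono_measure _ Measure.restrict_le_self
  have hjc : Continuous (Function.uncurry fun (y : E3) (t : ℝ) => fderiv ℝ f (x + t • y)) := by
    unfold Function.uncurry; fun_prop
  calc ‖f x‖ₑ = ∫⁻ y in Q, ‖f x‖ₑ := by simp
    _ ≤ ∫⁻ y in Q, (‖f (x + (1:ℝ) • y)‖ₑ
      + ∫⁻ t in Set.Icc (0:ℝ) 1, ‖fderiv ℝ f (x + t • y)‖ₑ) :=
        setLIntegral_mono' measurableSet_Icc hpt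
    _ = (∫⁻ y in Q, ‖f (x + (1:ℝ) • y)‖ₑ)
      + ∫⁻ y in Q, ∫⁻ t in Set.Icc (0:ℝ) 1, ‖fderiv ℝ f (x + t • y)‖ₑ := by
        rw [lintegral_add_left]
        exact (by fun_prop : Continuous fun y => f (x + (1:ℝ) • y)).enorm.measurable
    _ = (∫⁻ y in Q, ‖f (x + (1:ℝ) • y)‖ₑ)
      + ∫⁻ t in Set.Icc (0:ℝ) 1, ∫⁻ y in Q, ‖fderiv ℝ f (x + t • y)‖ₑ := by
        congr 1
        exact lintegral_lintegral_swap (f := fun y t => ‖fderiv ℝ f (x + t • y)‖ₑ)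
          hjc.enorm.measurable.aemeasurable
    _ ≤ _ := by
        gcongr
        · simpa using hL f hfc 1 one_pos
        · rw [Kc, ← lintegral_mul_const _ (by fun_prop), ← restrict_Ioc_eq_restrict_Icc]
          exact setLIntegral_mono' measurableSet_Ioc fun t ht => hL _ hdc t ht.1

lemma pd_contDiff (i : Fin 3) {f : E3 → ℝ} (hf : ContDiff ℝ (⊤ : ℕ∞) f) :
    ContDiff ℝ (⊤ : ℕ∞) (pd i f) := by
  have h : ContDiff ℝ (⊤ : ℕ∞) (fderiv ℝ f) := hf.fderiv_right (by simp)
  exact h.clm_apply contDiff_const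

lemma pd_compact (i : Fin 3) {f : E3 → ℝ} (hf : HasCompactSupport f) :
    HasCompactSupport (pd i f) := hf.fderiv_apply ℝ _

lemma enorm_fderiv_le (f : E3 → ℝ) (x : E3) : ‖fderiv ℝ f x‖ ≤ ∑ i, ‖pd i f x‖ := by
  refine ContinuousLinearMap.opNorm_le_bound _ (by positivity) fun v => ?_
  have hv : v = ∑ i, v i • (Pi.single i (1:ℝ) : E3) := by
    ext j; simp [Finset.sum_apply, Pi.single_apply]
  have : fderiv ℝ f x v = ∑ i, v i • pd i f x := by
    conv_lhs => rw [hv]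
    simp only [map_sum, map_smul]; rfl
  rw [this, Finset.sum_mul]
  refine (norm_sum_le _ _).trans (Finset.sum_le_sum fun i _ => ?_)
  rw [norm_smul, mul_comm]
  gcongr
  exact norm_le_pi_norm v i

lemma eLpNorm_fderiv_le (f : E3 → ℝ) (hf : ContDiff ℝ (⊤ : ℕ∞) f) (p : ENNReal) (hp : 1 ≤ p)
    (D : ENNReal) (h : ∀ i, eLpNorm (pd i f) p volume ≤ D) :
    eLpNorm (fderiv ℝ f) p volume ≤ 3 * D := by
  calc eLpNorm (fderiv ℝ f) p volume ≤ eLpNorm (∑ i, fun x => ‖pd i f x‖) p volume := by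
        refine eLpNorm_mono_real fun x => ?_
        simpa using enorm_fderiv_le f x
    _ ≤ ∑ i, eLpNorm (fun x => ‖pd i f x‖) p volume :=
        eLpNorm_sum_le (fun i _ => (pd_contDiff i hf).continuous.norm.aestronglyMeasurable) hp
    _ ≤ ∑ i : Fin 3, D := by
        refine Finset.sum_le_sum fun i _ => ?_
        rw [eLpNorm_norm]; exact h i
    _ = 3 * D := by simp

lemma sobolev6 : ∃ S : NNReal, ∀ (f : E3 → ℝ), ContDiff ℝ (⊤ : ℕ∞) f → HasCompactSupport f →
    ∀ D : ENNReal, (∀ i, eLpNorm (pd i f) 2 volume ≤ D) → eLpNorm f 6 volume ≤ S * D := by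
  refine ⟨SNormLESNormFDerivOfEqConst ℝ (volume : Measure E3) 2 * 3, fun f hf hc D h => ?_⟩
  have h1 := eLpNorm_le_eLpNorm_fderiv_of_eq (volume : Measure E3) (u := f)
    (hf.of_le (by exact_mod_cast le_top)) hc
    (p := 2) (p' := 6) (by norm_num) (by simp) (by norm_num [Module.finrank_fin_fun])
  simp only [ENNReal.coe_ofNat, NNReal.coe_ofNat] at h1
  refine h1.trans ?_
  rw [ENNReal.coe_mul, mul_assoc]
  gcongr
  exact eLpNorm_fderiv_le f hf 2 (by norm_num) D h

lemma key : ∃ M : NNReal, ∀ (w : E3 → ℝ), ContDiff ℝ (⊤ : ℕ∞) w → HasCompactSupport w →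
    ∀ D : ENNReal, (∀ i, eLpNorm (pd i w) 2 volume ≤ D) →
      (∀ i j, eLpNorm (pd i (pd j w)) 2 volume ≤ D) →
      (∀ x, ‖w x‖ₑ ≤ M * D) ∧ ∀ i, eLpNorm (pd i w) 4 volume ≤ M * D := by
  obtain ⟨S, hS⟩ := sobolev6
  obtain ⟨K, hK⟩ : ∃ K : NNReal, (K : ENNReal) = Kc := ⟨Kc.toNNReal, ENNReal.coe_toNNReal Kc_lt_top.ne⟩
  refine ⟨1 + S + K * (3 * S), fun w hw hc D h1 h2 => ?_⟩
  have w6 := hS w hw hc D h1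
  have d6 : ∀ i, eLpNorm (pd i w) 6 volume ≤ S * D := fun i =>
    hS _ (pd_contDiff i hw) (pd_compact i hc) D (fun k => h2 k i)
  constructor
  · intro x
    refine (morrey w (hw.of_le (by exact_mod_cast le_top)) x).trans ?_
    calc _ ≤ S * D + K * (3 * (S * D)) := by
          rw [← hK]; gcongr
          exact eLpNorm_fderiv_le w hw 6 (by norm_num) _ d6
      _ ≤ 1 * D + (S * D + K * (3 * (S * D))) := le_add_self
      _ = _ := by push_cast; ring
  · intro i
    have hle : ((1 + S : NNReal) : ENNReal) * D ≤ ((1 + S + K * (3 * S) : NNReal) : ENNReal) * D := by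
      exact mul_le_mul_left (ENNReal.coe_le_coe.2 le_self_add) _
    refine (eLpNorm_four_le _ (pd_contDiff i hw).continuous (((1 + S : NNReal) : ENNReal) * D)
      ?_ ?_).trans hle
    · refine (h1 i).trans ?_
      push_cast; rw [add_mul, one_mul]; exact le_self_add
    · refine (d6 i).trans ?_
      push_cast; rw [add_mul]; exact le_add_self

lemma eLp_mul_sup (f g : E3 → ℝ) (B D : ENNReal) (hg : Continuous g) (hf : ∀ x, ‖f x‖ₑ ≤ B)
    (hD : eLpNorm g 2 volume ≤ D) : eLpNorm (fun x => f x * g x) 2 volume ≤ B * D := by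
  have := eLpNorm_smul_le_eLpNorm_top_mul_eLpNorm 2 (μ := volume) hg.aestronglyMeasurable f
  refine (this.trans ?_)
  gcongr
  rw [eLpNorm_exponent_top]
  exact eLpNormEssSup_le_of_ae_enorm_bound (Filter.Eventually.of_forall hf)

lemma eLp_mul_four (f g : E3 → ℝ) (B D : ENNReal) (hf : Continuous f) (hg : Continuous g)
    (hB : eLpNorm f 4 volume ≤ B) (hD : eLpNorm g 4 volume ≤ D) :
    eLpNorm (fun x => f x * g x) 2 volume ≤ B * D := by
  have : ENNReal.HolderTriple 4 4 2 := ⟨by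
    rw [← ENNReal.toReal_eq_toReal_iff' (by simp) (by simp), ENNReal.toReal_add (by simp) (by simp)]
    norm_num⟩
  have := eLpNorm_smul_le_mul_eLpNorm (p := 4) (q := 4) (r := 2) (μ := volume)
    hg.aestronglyMeasurable hf.aestronglyMeasurable
  refine (this.trans ?_)
  gcongr

lemma eLpNorm_two_eq (g : E3 → ℝ) (hg : Continuous g) (hc : HasCompactSupport g) :
    eLpNorm g 2 volume = ENNReal.ofReal (Real.sqrt (∫ x, g x ^ 2)) := by
  have hm : MemLp g 2 volume := hg.memLp_of_hasCompactSupport hc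
  rw [hm.eLpNorm_eq_integral_rpow_norm (by norm_num) (by norm_num), Real.sqrt_eq_rpow]
  simp

lemma pd_conv (u : E3 → E3) (hu : ContDiff ℝ (⊤ : ℕ∞) u) (i j : Fin 3) (x : E3) :
    pd i (fun y => ∑ k : Fin 3, u y k * pd k (fun z => u z j) y) x
      = ∑ k, (pd i (fun y => u y k) x * pd k (fun z => u z j) x
          + u x k * pd i (pd k (fun z => u z j)) x) := by
  have hc : ∀ k, ContDiff ℝ (⊤ : ℕ∞) (fun y => u y k) := fun k => contDiff_pi.1 hu k
  have h1 : ∀ k, HasFDerivAt (fun y => u y k) (fderiv ℝ (fun y => u y k) x) x := fun k =>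
    ((hc k).differentiable (by simp) x).hasFDerivAt
  have h2 : ∀ k, HasFDerivAt (pd k (fun y => u y j)) (fderiv ℝ (pd k (fun y => u y j)) x) x :=
    fun k => ((pd_contDiff k (hc j)).differentiable (by simp) x).hasFDerivAt
  have h3 := HasFDerivAt.fun_sum (u := Finset.univ) (fun k (_ : k ∈ Finset.univ) => (h1 k).fun_mul (h2 k))
  unfold pd at h3 ⊢
  rw [h3.fderiv]
  simp only [sum_apply, add_apply,
    smul_apply, smul_eq_mul]
  exact Finset.sum_congr rfl fun k _ => by ring

lemma sum3_le (g : Fin 3 → E3 → ℝ) (hg : ∀ k, Continuous (g k)) (B : ENNReal)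
    (h : ∀ k, eLpNorm (g k) 2 volume ≤ B) :
    eLpNorm (fun x => ∑ k, g k x) 2 volume ≤ 3 * B := by
  have e : (fun x => ∑ k, g k x) = ∑ k, g k := by ext x; simp
  rw [e]
  calc _ ≤ ∑ k, eLpNorm (g k) 2 volume :=
        eLpNorm_sum_le (fun i _ => (hg i).aestronglyMeasurable) (by norm_num)
    _ ≤ ∑ k : Fin 3, B := Finset.sum_le_sum fun k _ => h k
    _ = _ := by simp

lemma int_le (g : E3 → ℝ) (hg : Continuous g) (hc : HasCompactSupport g) (P : ℝ) (hP : 0 ≤ P)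
    (h : eLpNorm g 2 volume ≤ ENNReal.ofReal P) : ∫ x, g x ^ 2 ≤ P ^ 2 := by
  rw [eLpNorm_two_eq g hg hc, ENNReal.ofReal_le_ofReal_iff hP] at h
  exact (Real.sqrt_le_left hP).1 h

/-- Nonlinear product estimate `‖(u·∇)u‖_{H¹} ≤ C ‖∇u‖_{H¹}²`: there is `C > 0` such that
for every smooth compactly supported `u : ℝ³ → ℝ³`,
`‖(u·∇)u‖_{L²} + ‖∇((u·∇)u)‖_{L²} ≤ C (‖∇u‖_{L²} + ‖∇²u‖_{L²})²`. -/
theorem convection_H1_estimate :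
    ∃ C : ℝ, 0 < C ∧ ∀ u : (Fin 3 → ℝ) → (Fin 3 → ℝ),
      ContDiff ℝ (⊤ : ℕ∞) u → HasCompactSupport u →
      Real.sqrt (∑ j : Fin 3, ∫ x : Fin 3 → ℝ,
          (∑ k : Fin 3, u x k * pd k (fun y => u y j) x) ^ 2)
        + Real.sqrt (∑ i : Fin 3, ∑ j : Fin 3, ∫ x : Fin 3 → ℝ,
            (pd i (fun y => ∑ k : Fin 3, u y k * pd k (fun z => u z j) y) x) ^ 2)
      ≤ C * (Real.sqrt (∑ i : Fin 3, ∑ j : Fin 3, ∫ x : Fin 3 → ℝ,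
              (pd i (fun y => u y j) x) ^ 2)
            + Real.sqrt (∑ i : Fin 3, ∑ j : Fin 3, ∑ k : Fin 3, ∫ x : Fin 3 → ℝ,
              (pd i (pd j (fun y => u y k)) x) ^ 2)) ^ 2 := by
  obtain ⟨M, hM⟩ := key
  set P : ℝ := 3 * (M * M + M) with hP
  have hP0 : 0 ≤ P := by positivity
  refine ⟨6 * P + 1, by positivity, fun u hu hcs => ?_⟩
  have hc : ∀ k, ContDiff ℝ (⊤ : ℕ∞) (fun y => u y k) := fun k => contDiff_pi.1 hu k
  have hs : ∀ k, HasCompactSupport (fun y => u y k) := fun k =>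
    hcs.comp_left (g := fun v : E3 => v k) rfl
  set A1 := Real.sqrt (∑ i : Fin 3, ∑ j : Fin 3, ∫ x : Fin 3 → ℝ,
              (pd i (fun y => u y j) x) ^ 2) with hA1
  set A2 := Real.sqrt (∑ i : Fin 3, ∑ j : Fin 3, ∑ k : Fin 3, ∫ x : Fin 3 → ℝ,
              (pd i (pd j (fun y => u y k)) x) ^ 2) with hA2
  set A := A1 + A2 with hA
  have hA0 : 0 ≤ A := by positivity
  have b1 : ∀ j i, eLpNorm (pd i (fun y => u y j)) 2 volume ≤ ENNReal.ofReal A := by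
    intro j i
    rw [eLpNorm_two_eq _ (pd_contDiff i (hc j)).continuous (pd_compact i (hs j))]
    apply ENNReal.ofReal_le_ofReal
    refine le_trans (Real.sqrt_le_sqrt ?_) (le_add_of_nonneg_right (Real.sqrt_nonneg _))
    refine le_trans ?_ (Finset.single_le_sum (f := fun i => ∑ j : Fin 3, ∫ x : Fin 3 → ℝ,
      (pd i (fun y => u y j) x) ^ 2) (fun i _ => by positivity) (Finset.mem_univ i))
    exact Finset.single_le_sum (f := fun j => ∫ x : Fin 3 → ℝ,
      (pd i (fun y => u y j) x) ^ 2) (fun i _ => by positivity) (Finset.mem_univ j)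
  have b2 : ∀ k i j, eLpNorm (pd i (pd j (fun y => u y k))) 2 volume ≤ ENNReal.ofReal A := by
    intro k i j
    rw [eLpNorm_two_eq _ (pd_contDiff i (pd_contDiff j (hc k))).continuous
      (pd_compact i (pd_compact j (hs k)))]
    apply ENNReal.ofReal_le_ofReal
    refine le_trans (Real.sqrt_le_sqrt ?_) (le_add_of_nonneg_left (Real.sqrt_nonneg _))
    refine le_trans ?_ (Finset.single_le_sum (f := fun i => ∑ j : Fin 3, ∑ k : Fin 3,
      ∫ x : Fin 3 → ℝ, (pd i (pd j (fun y => u y k)) x) ^ 2)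
      (fun i _ => by positivity) (Finset.mem_univ i))
    refine le_trans ?_ (Finset.single_le_sum (f := fun j => ∑ k : Fin 3,
      ∫ x : Fin 3 → ℝ, (pd i (pd j (fun y => u y k)) x) ^ 2)
      (fun i _ => by positivity) (Finset.mem_univ j))
    exact Finset.single_le_sum (f := fun k =>
      ∫ x : Fin 3 → ℝ, (pd i (pd j (fun y => u y k)) x) ^ 2)
      (fun i _ => by positivity) (Finset.mem_univ k)
  set D := ENNReal.ofReal A with hD
  have hk := fun k => hM _ (hc k) (hs k) D (b1 k) (b2 k)
  have hPD : 3 * ((M * D) * (M * D) + (M * D) * D) = ENNReal.ofReal (P * A ^ 2) := by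
    rw [hP, ENNReal.ofReal_mul (by positivity), ENNReal.ofReal_mul (by positivity),
      ENNReal.ofReal_add (by positivity) (by positivity), ENNReal.ofReal_mul (by positivity),
      ENNReal.ofReal_pow hA0, ENNReal.ofReal_coe_nnreal, ← hD]
    simp only [ENNReal.ofReal_ofNat]
    ring
  have hvS : ∀ j, ContDiff ℝ (⊤ : ℕ∞) (fun y => ∑ k : Fin 3, u y k * pd k (fun z => u z j) y) :=
    fun j => ContDiff.sum fun k _ => (hc k).mul (pd_contDiff k (hc j))
  have hvC : ∀ j, HasCompactSupport (fun y => ∑ k : Fin 3, u y k * pd k (fun z => u z j) y) := by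
    intro j
    refine hcs.mono fun y hy => ?_
    contrapose! hy
    simp only [Function.mem_support, not_not] at hy ⊢
    simp [hy]
  have c1 : ∀ j, ∫ x : Fin 3 → ℝ, (∑ k : Fin 3, u x k * pd k (fun y => u y j) x) ^ 2
      ≤ (P * A ^ 2) ^ 2 := by
    intro j
    refine int_le _ (hvS j).continuous (hvC j) _ (by positivity) ?_
    rw [← hPD]
    refine sum3_le _ (fun k => ((hc k).mul (pd_contDiff k (hc j))).continuous) _ fun k => ?_
    exact (eLp_mul_sup _ _ _ _ (pd_contDiff k (hc j)).continuous (hk k).1 (b1 j k)).trans le_add_self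
  have c2 : ∀ i j, ∫ x : Fin 3 → ℝ,
      (pd i (fun y => ∑ k : Fin 3, u y k * pd k (fun z => u z j) y) x) ^ 2
      ≤ (P * A ^ 2) ^ 2 := by
    intro i j
    refine int_le _ (pd_contDiff i (hvS j)).continuous (pd_compact i (hvC j)) _ (by positivity) ?_
    rw [← hPD, funext (pd_conv u hu i j)]
    have q1 : ∀ k, Continuous fun x => pd i (fun y => u y k) x * pd k (fun z => u z j) x := fun k =>
      ((pd_contDiff i (hc k)).mul (pd_contDiff k (hc j))).continuous
    have q2 : ∀ k, Continuous fun x => u x k * pd i (pd k (fun z => u z j)) x := fun k =>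
      ((hc k).mul (pd_contDiff i (pd_contDiff k (hc j)))).continuous
    refine sum3_le _ (fun k => (q1 k).add (q2 k)) _ fun k => ?_
    refine (eLpNorm_add_le (q1 k).aestronglyMeasurable (q2 k).aestronglyMeasurable
      (by norm_num)).trans (add_le_add ?_ ?_)
    · exact eLp_mul_four _ _ _ _ (pd_contDiff i (hc k)).continuous (pd_contDiff k (hc j)).continuous
        ((hk k).2 i) ((hk j).2 k)
    · exact eLp_mul_sup _ _ _ _ (pd_contDiff i (pd_contDiff k (hc j))).continuous (hk k).1 (b2 j i k)
  have hPA : 0 ≤ P * A ^ 2 := by positivity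
  have s1 : Real.sqrt (∑ j : Fin 3, ∫ x : Fin 3 → ℝ,
          (∑ k : Fin 3, u x k * pd k (fun y => u y j) x) ^ 2) ≤ 3 * (P * A ^ 2) := by
    refine Real.sqrt_le_iff.2 ⟨by positivity, ?_⟩
    refine (Finset.sum_le_sum fun j _ => c1 j).trans ?_
    simp only [Finset.sum_const, Finset.card_univ, Fintype.card_fin, nsmul_eq_mul]
    push_cast
    nlinarith [sq_nonneg (P * A ^ 2)]
  have s2 : Real.sqrt (∑ i : Fin 3, ∑ j : Fin 3, ∫ x : Fin 3 → ℝ,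
            (pd i (fun y => ∑ k : Fin 3, u y k * pd k (fun z => u z j) y) x) ^ 2)
      ≤ 3 * (P * A ^ 2) := by
    refine Real.sqrt_le_iff.2 ⟨by positivity, ?_⟩
    refine (Finset.sum_le_sum fun i _ => Finset.sum_le_sum fun j _ => c2 i j).trans ?_
    simp only [Finset.sum_const, Finset.card_univ, Fintype.card_fin, nsmul_eq_mul]
    push_cast
    nlinarith [sq_nonneg (P * A ^ 2)]
  nlinarith [sq_nonneg A]
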